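/- Let D ⊂ ℝ² be a compact convex set with nonempty interior that is smooth (unique supporting line at each boundary point), O an interior point, and f̃(φ) the length of the chord of D through O in direction φ. If φ* is a local maximizer of f̃ and the tangent lines to ∂D at the chord endpoints Ã(φ*) and B̃(φ*) are parallel, then the line through Ã(φ*) and B̃(φ*) is perpendicular to those tangent lines. -/

import Mathlib

open Real RealInnerProductSpace

/-- Unit direction vector in the plane at angle `φ`. -/
noncomputable def lineDir (φ : ℝ) : EuclideanSpace ℝ (Fin 2) :=
  (WithLp.equiv 2 (Fin 2 → ℝ)).symm ![Real.cos φ, Real.sin φ]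

/-- At a point `P` of a convex body with a unique outward unit normal `v`, the body contains an
initial piece of every ray from `P` pointing strictly into the supporting half-space. -/
theorem exists_pos_ray_subset_of_unique_normal {E : Type*} [NormedAddCommGroup E]
    [InnerProductSpace ℝ E] [CompleteSpace E] {D : Set E} (hconv : Convex ℝ D)
    (hint : (interior D).Nonempty) {P v u : E} (hP : P ∈ D)
    (huniq : ∀ w : E, ‖w‖ = 1 → (∀ x ∈ D, ⟪x - P, w⟫ ≤ 0) → w = v) (hu : ⟪u, v⟫ < 0) :
    ∃ T : ℝ, 0 < T ∧ ∀ t : ℝ, 0 ≤ t → t ≤ T → P + t • u ∈ D := by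
  by_cases hray : ∃ T : ℝ, 0 < T ∧ P + T • u ∈ interior D
  · obtain ⟨T, hT, hTD⟩ := hray
    refine ⟨T, hT, fun t h0 h1 => ?_⟩
    have h := hconv.add_smul_sub_mem hP (interior_subset hTD)
      (t := t / T) ⟨by positivity, (div_le_one hT).2 h1⟩
    rwa [add_sub_cancel_left, smul_smul, div_mul_cancel₀ _ hT.ne'] at h
  exfalso
  push Not at hray
  have hRconv : Convex ℝ ((fun t : ℝ => P + t • u) '' Set.Ioi 0) := by
    rintro _ ⟨a, ha, rfl⟩ _ ⟨b, hb, rfl⟩ p q hp hq hpq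
    refine ⟨p * a + q * b, (convex_Ioi (0 : ℝ)) ha hb hp hq hpq, ?_⟩
    have : p = 1 - q := by linarith
    subst this
    simp only
    module
  have hdisj : Disjoint (interior D) ((fun t : ℝ => P + t • u) '' Set.Ioi 0) := by
    rw [Set.disjoint_right]
    rintro _ ⟨a, ha, rfl⟩
    exact hray a ha
  obtain ⟨g, k, hg1, hg2⟩ :=
    geometric_hahn_banach_open hconv.interior isOpen_interior hRconv hdisj
  have hle : ∀ x ∈ D, g x ≤ k := fun x hx => by
    have hx' : x ∈ closure (interior D) := by
      rw [hconv.closure_interior_eq_closure_of_nonempty_interior hint]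
      exact subset_closure hx
    exact closure_minimal (fun y hy => (hg1 y hy).le)
      (isClosed_le g.continuous continuous_const) hx'
  have hge : ∀ t : ℝ, 0 < t → k ≤ g P + t * g u := fun t ht => by
    simpa using hg2 _ ⟨t, ht, rfl⟩
  have hkP : k ≤ g P := by
    have hcont : Continuous fun t : ℝ => g P + t * g u := by fun_prop
    have h : (0 : ℝ) ∈ closure (Set.Ioi (0 : ℝ)) := by simp
    have h0 : (0 : ℝ) ∈ {t : ℝ | k ≤ g P + t * g u} :=
      closure_minimal (fun t ht => hge t ht) (isClosed_le continuous_const hcont) h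
    simpa using h0
  have hgu : 0 ≤ g u := by
    have h1 := hge 1 one_pos
    have h2 := hle P hP
    linarith
  set w := (InnerProductSpace.toDual ℝ E).symm g with hw
  have hgw : ∀ x, g x = ⟪x, w⟫ := fun x => by
    rw [real_inner_comm, hw, InnerProductSpace.toDual_symm_apply]
  have hw0 : w ≠ 0 := by
    intro h0
    obtain ⟨x, hx⟩ := hint
    have h1 := hg1 x hx
    rw [hgw, h0, inner_zero_right] at h1
    rw [hgw, h0, inner_zero_right] at hkP
    linarith
  have hwn : 0 < ‖w‖ := norm_pos_iff.2 hw0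
  have hwv : ‖w‖⁻¹ • w = v := by
    apply huniq
    · rw [norm_smul, norm_inv, norm_norm, inv_mul_cancel₀ hwn.ne']
    · intro x hx
      rw [inner_smul_right, ← hgw, map_sub]
      exact mul_nonpos_of_nonneg_of_nonpos (by positivity) (by linarith [hle x hx])
  rw [← hwv, inner_smul_right, ← hgw] at hu
  have : 0 ≤ ‖w‖⁻¹ * g u := by positivity
  linarith

/-- A supporting half-space at a point contains interior points of the set strictly. -/
theorem inner_sub_neg_of_mem_interior {E : Type*} [NormedAddCommGroup E]
    [InnerProductSpace ℝ E] {D : Set E} {O P v : E} (hO : O ∈ interior D) (hv : ‖v‖ = 1)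
    (hsupp : ∀ x ∈ D, ⟪x - P, v⟫ ≤ 0) : ⟪O - P, v⟫ < 0 := by
  have hcont : ContinuousAt (fun t : ℝ => O + t • v) 0 := by fun_prop
  have hev : ∀ᶠ t : ℝ in nhds 0, O + t • v ∈ D :=
    hcont.eventually_mem (by simpa using mem_interior_iff_mem_nhds.1 hO)
  obtain ⟨t, ht, ht0⟩ := ((hev.filter_mono nhdsWithin_le_nhds).and
    (self_mem_nhdsWithin (s := Set.Ioi (0 : ℝ)))).exists
  have h := hsupp _ ht
  rw [add_sub_right_comm, inner_add_left, inner_smul_left, real_inner_self_eq_norm_sq, hv] at h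
  have : (0 : ℝ) < t := ht0
  simp at h
  linarith

/-- Directions near a nonzero multiple of `lineDir φ` have angles near `φ`. -/
theorem exists_continuousAt_angle (φ L : ℝ) (hL : L ≠ 0) (w : EuclideanSpace ℝ (Fin 2)) :
    ∃ ψ : ℝ → ℝ, ψ 0 = φ ∧ ContinuousAt ψ 0 ∧
      ∀ᶠ ε in nhds (0 : ℝ), ∃ r : ℝ, L • lineDir φ + ε • w = r • lineDir (ψ ε) := by
  set α := w 0 * cos φ + w 1 * sin φ with hα
  set β := w 1 * cos φ - w 0 * sin φ with hβ
  have hne : ∀ᶠ ε in nhds (0 : ℝ), L + ε * α ≠ 0 := by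
    have hcont : ContinuousAt (fun ε : ℝ => L + ε * α) 0 := by fun_prop
    exact hcont.eventually_ne (by simpa using hL)
  refine ⟨fun ε => φ + arctan (ε * β / (L + ε * α)), by simp, ?_, ?_⟩
  · refine continuousAt_const.add (continuous_arctan.continuousAt.comp ?_)
    exact ContinuousAt.div (by fun_prop) (by fun_prop) (by simpa using hL)
  · filter_upwards [hne] with ε hε
    have hc : cos (arctan (ε * β / (L + ε * α))) ≠ 0 := (cos_arctan_pos _).ne'
    have hs : sin (arctan (ε * β / (L + ε * α))) =
        ε * β / (L + ε * α) * cos (arctan (ε * β / (L + ε * α))) := by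
      conv_rhs => enter [1]; rw [← tan_arctan (ε * β / (L + ε * α))]
      rw [tan_mul_cos hc]
    have hw0 : α * cos φ - β * sin φ = w 0 := by
      rw [hα, hβ]
      linear_combination w 0 * sin_sq_add_cos_sq φ
    have hw1 : α * sin φ + β * cos φ = w 1 := by
      rw [hα, hβ]
      linear_combination w 1 * sin_sq_add_cos_sq φ
    refine ⟨(L + ε * α) / cos (arctan (ε * β / (L + ε * α))), ?_⟩
    set C := cos (arctan (ε * β / (L + ε * α)))
    ext i
    fin_cases i
    · have h : (L + ε * α) / C * (cos φ * C - sin φ * (ε * β / (L + ε * α) * C)) =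
          L * cos φ + ε * w 0 := by
        rw [← hw0]
        field_simp
        ring
      simpa [lineDir, cos_add, hs] using h.symm
    · have h : (L + ε * α) / C * (sin φ * C + cos φ * (ε * β / (L + ε * α) * C)) =
          L * sin φ + ε * w 1 := by
        rw [← hw1]
        field_simp
        ring
      simpa [lineDir, sin_add, hs] using h.symm

/-- Two points of a segment are at most as far apart as its endpoints. -/
theorem dist_le_dist_of_mem_segment {E : Type*} [NormedAddCommGroup E] [NormedSpace ℝ E]
    {a b x y : E} (hx : x ∈ segment ℝ a b) (hy : y ∈ segment ℝ a b) : dist x y ≤ dist a b := by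
  rw [segment_eq_image'] at hx hy
  obtain ⟨s, ⟨hs0, hs1⟩, rfl⟩ := hx
  obtain ⟨t, ⟨ht0, ht1⟩, rfl⟩ := hy
  rw [dist_eq_norm, add_sub_add_left_eq_sub, ← sub_smul, norm_smul, Real.norm_eq_abs,
    dist_comm a b, dist_eq_norm]
  exact mul_le_of_le_one_left (norm_nonneg _) (abs_le.2 ⟨by linarith, by linarith⟩)

/-- Moving from `c` along its orthogonal projection `p` onto a subspace increases the norm by a
first-order amount. -/
theorem norm_mul_lt_norm_add_smul {E : Type*} [NormedAddCommGroup E] [InnerProductSpace ℝ E]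
    {c p : E} (hc : c ≠ 0) (hp : p ≠ 0) (hcp : ⟪c, p⟫ = ‖p‖ ^ 2) {ε : ℝ} (hε : 0 < ε) :
    ‖c‖ * (1 + ‖p‖ ^ 2 / (2 * ‖c‖ ^ 2) * ε) < ‖c + ε • p‖ := by
  have hcn : 0 < ‖c‖ := norm_pos_iff.2 hc
  have hpn : 0 < ‖p‖ := norm_pos_iff.2 hp
  have hpc : ‖p‖ ≤ ‖c‖ := by
    have h := real_inner_le_norm c p
    rw [hcp, sq] at h
    exact le_of_mul_le_mul_right h hpn
  set k := ‖p‖ ^ 2 / (2 * ‖c‖ ^ 2) with hk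
  have hkc : k * ‖c‖ ^ 2 = ‖p‖ ^ 2 / 2 := by rw [hk]; field_simp
  have hk1 : k ≤ 1 / 2 := by
    rw [hk, div_le_div_iff₀ (by positivity) (by norm_num)]
    nlinarith
  refine lt_of_pow_lt_pow_left₀ 2 (norm_nonneg _) ?_
  rw [norm_add_sq_real, inner_smul_right, hcp, norm_smul, Real.norm_eq_abs, abs_of_pos hε]
  have hexp : (‖c‖ * (1 + k * ε)) ^ 2 =
      ‖c‖ ^ 2 + ε * ‖p‖ ^ 2 + k * ε ^ 2 * (‖p‖ ^ 2 / 2) := by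
    rw [← hkc]
    linear_combination 2 * ε * hkc
  rw [hexp]
  have h1 : 0 < ε * ‖p‖ ^ 2 := by positivity
  have h2 : 0 ≤ (1 / 2 - k) * (ε ^ 2 * ‖p‖ ^ 2) :=
    mul_nonneg (by linarith) (by positivity)
  have h3 : 0 ≤ ε ^ 2 * ‖p‖ ^ 2 := by positivity
  nlinarith

set_option maxHeartbeats 1000000 in
/-- Let `D ⊆ ℝ²` be compact convex with nonempty interior and smooth: at each
boundary point there is a unique supporting line (i.e. a unique unit outward
normal).  Let `O` be an interior point and `f φ` the length of the chord
`[A φ, B φ] = l(φ) ∩ D` through `O` at angle `φ`.  If `φ*` is a local maximizer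
of `f` and the tangent lines to `∂D` at `A φ*` and `B φ*` are parallel (their
unit normals `v₁, v₂` satisfy `v₂ = v₁` or `v₂ = -v₁`), then the chord `A φ* B φ*`
is perpendicular to those tangent lines, i.e. `B φ* - A φ*` is parallel to `v₁`. -/
theorem statement17 (D : Set (EuclideanSpace ℝ (Fin 2)))
    (hD : IsCompact D) (hconv : Convex ℝ D) (hint : (interior D).Nonempty)
    (hsmooth : ∀ P ∈ frontier D, ∃! v : EuclideanSpace ℝ (Fin 2),
      ‖v‖ = 1 ∧ ∀ x ∈ D, ⟪x - P, v⟫ ≤ 0)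
    (O : EuclideanSpace ℝ (Fin 2)) (hO : O ∈ interior D)
    (A B : ℝ → EuclideanSpace ℝ (Fin 2))
    (hchord : ∀ φ : ℝ,
      {x | ∃ t : ℝ, x = O + t • lineDir φ} ∩ D = segment ℝ (A φ) (B φ))
    (f : ℝ → ℝ) (hf : ∀ φ, f φ = dist (A φ) (B φ))
    (φs : ℝ) (hmax : IsLocalMax f φs)
    (v₁ v₂ : EuclideanSpace ℝ (Fin 2))
    (hv₁ : ‖v₁‖ = 1 ∧ ∀ x ∈ D, ⟪x - A φs, v₁⟫ ≤ 0)
    (hv₂ : ‖v₂‖ = 1 ∧ ∀ x ∈ D, ⟪x - B φs, v₂⟫ ≤ 0)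
    (hpar : v₂ = v₁ ∨ v₂ = -v₁) :
    ∃ t : ℝ, B φs - A φs = t • v₁ := by
  have hseg : ∀ φ, segment ℝ (A φ) (B φ) ⊆ D := fun φ x hx => by
    rw [← hchord φ] at hx
    exact hx.2
  have hAD : A φs ∈ D := hseg φs (left_mem_segment ℝ _ _)
  have hBD : B φs ∈ D := hseg φs (right_mem_segment ℝ _ _)
  have hfront : ∀ P ∈ D, ∀ v : EuclideanSpace ℝ (Fin 2),
      (‖v‖ = 1 ∧ ∀ x ∈ D, ⟪x - P, v⟫ ≤ 0) → P ∈ frontier D := fun P hP v hv =>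
    ⟨subset_closure hP, fun h => by simpa using inner_sub_neg_of_mem_interior h hv.1 hv.2⟩
  have hray : ∀ P ∈ D, ∀ v : EuclideanSpace ℝ (Fin 2),
      (‖v‖ = 1 ∧ ∀ x ∈ D, ⟪x - P, v⟫ ≤ 0) → ∀ u, ⟪u, v⟫ < 0 →
      ∃ T : ℝ, 0 < T ∧ ∀ t : ℝ, 0 ≤ t → t ≤ T → P + t • u ∈ D := fun P hP v hv u hu =>
    exists_pos_ray_subset_of_unique_normal hconv hint hP
      (fun w hw1 hw2 => (hsmooth P (hfront P hP v hv)).unique ⟨hw1, hw2⟩ hv) hu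
  have hOseg : O ∈ segment ℝ (A φs) (B φs) := by
    rw [← hchord φs]
    exact ⟨⟨0, by simp⟩, interior_subset hO⟩
  rw [segment_eq_image'] at hOseg
  obtain ⟨s, ⟨hs0, hs1⟩, hsO⟩ := hOseg
  obtain ⟨L, hL⟩ : ∃ L : ℝ, B φs - A φs = L • lineDir φs := by
    have hA := left_mem_segment ℝ (A φs) (B φs)
    have hB := right_mem_segment ℝ (A φs) (B φs)
    rw [← hchord φs] at hA hB
    obtain ⟨⟨a, ha⟩, -⟩ := hA
    obtain ⟨⟨b, hb⟩, -⟩ := hB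
    exact ⟨b - a, by rw [ha, hb]; module⟩
  by_contra hcon
  push Not at hcon
  set c := B φs - A φs with hc
  have hBc : B φs = A φs + c := by rw [hc]; abel
  have hOA : O - A φs = s • c := by rw [← hsO]; simp
  have hOB : O - B φs = (-(1 - s)) • c := by rw [hBc, ← hsO]; simp only; module
  have hA1 := inner_sub_neg_of_mem_interior hO hv₁.1 hv₁.2
  have hB1 := inner_sub_neg_of_mem_interior hO hv₂.1 hv₂.2
  rw [hOA, real_inner_smul_left] at hA1
  rw [hOB, real_inner_smul_left] at hB1
  have hcv : ⟪c, v₁⟫ < 0 := by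
    by_contra! h
    nlinarith
  have hv2 : v₂ = -v₁ := hpar.resolve_left fun h => by
    rw [h] at hB1
    nlinarith
  set p := c - ⟪c, v₁⟫ • v₁ with hp
  have hp0 : p ≠ 0 := fun h => hcon _ (sub_eq_zero.1 h)
  have hpv : ⟪p, v₁⟫ = 0 := by
    rw [hp, inner_sub_left, real_inner_smul_left, real_inner_self_eq_norm_sq, hv₁.1]
    ring
  have hcp : ⟪c, p⟫ = ‖p‖ ^ 2 := by
    have h : c = p + ⟪c, v₁⟫ • v₁ := by rw [hp]; abel
    rw [← real_inner_self_eq_norm_sq p]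
    nth_rewrite 1 [h]
    rw [inner_add_left, real_inner_smul_left, real_inner_comm p v₁, hpv]
    ring
  have hc0 : c ≠ 0 := fun h => by simp [h] at hcv
  have hL0 : L ≠ 0 := fun h => hc0 (by rw [hL, h, zero_smul])
  set k := ‖p‖ ^ 2 / (2 * ‖c‖ ^ 2) with hk
  have hk0 : 0 < k := div_pos (pow_pos (norm_pos_iff.2 hp0) 2)
    (mul_pos two_pos (pow_pos (norm_pos_iff.2 hc0) 2))
  obtain ⟨TA, hTA, hTA'⟩ := hray _ hAD v₁ hv₁ (k • c - p) (by
    rw [inner_sub_left, real_inner_smul_left, hpv]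
    nlinarith)
  obtain ⟨TB, hTB, hTB'⟩ := hray _ hBD v₂ hv₂ (p - k • c) (by
    rw [hv2, inner_neg_right, inner_sub_left, real_inner_smul_left, hpv]
    nlinarith)
  obtain ⟨ψ, hψ0, hψc, hψ⟩ := exists_continuousAt_angle φs L hL0 p
  have hfψ : ∀ᶠ ε in nhds (0 : ℝ), f (ψ ε) ≤ f φs := by
    have h : Filter.Tendsto ψ (nhds 0) (nhds φs) := hψ0 ▸ hψc.tendsto
    exact h.eventually hmax
  obtain ⟨ε, ⟨⟨⟨⟨r, hr⟩, hfε⟩, hεA⟩, hεB⟩, hε⟩ :=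
    (((((hψ.and hfψ).and (eventually_le_nhds hTA)).and
      (eventually_le_nhds hTB)).filter_mono nhdsWithin_le_nhds).and
      (self_mem_nhdsWithin (s := Set.Ioi (0 : ℝ)))).exists
  have hε0 : (0 : ℝ) < ε := hε
  rw [← hL] at hr
  have hm : 0 < 1 + k * ε := by positivity
  have hfrac : ∀ x : ℝ, 0 ≤ x → x ≤ 1 → 0 ≤ x * ε / (1 + k * ε) ∧ x * ε / (1 + k * ε) ≤ ε := by
    intro x hx0 hx1
    refine ⟨by positivity, ?_⟩
    rw [div_le_iff₀ hm]
    nlinarith [mul_pos hk0 (mul_pos hε0 hε0), mul_nonneg (sub_nonneg.2 hx1) hε0.le]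
  have hA2 := hTA' (s * ε / (1 + k * ε)) (hfrac s hs0 hs1).1 ((hfrac s hs0 hs1).2.trans hεA)
  have hB2 := hTB' ((1 - s) * ε / (1 + k * ε)) (hfrac (1 - s) (by linarith) (by linarith)).1
    ((hfrac (1 - s) (by linarith) (by linarith)).2.trans hεB)
  have hA3 : A φs + (s * ε / (1 + k * ε)) • (k • c - p) =
      O + (-s / (1 + k * ε)) • (c + ε • p) := by
    rw [← hsO]
    simp only
    match_scalars <;> field_simp <;> ring
  have hB3 : B φs + ((1 - s) * ε / (1 + k * ε)) • (p - k • c) =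
      O + ((1 - s) / (1 + k * ε)) • (c + ε • p) := by
    rw [← hsO, hBc]
    simp only
    match_scalars <;> field_simp <;> ring
  rw [hA3] at hA2
  rw [hB3] at hB2
  have hA4 : O + (-s / (1 + k * ε)) • (c + ε • p) ∈ segment ℝ (A (ψ ε)) (B (ψ ε)) := by
    rw [← hchord]
    exact ⟨⟨-s / (1 + k * ε) * r, by rw [hr, smul_smul]⟩, hA2⟩
  have hB4 : O + ((1 - s) / (1 + k * ε)) • (c + ε • p) ∈ segment ℝ (A (ψ ε)) (B (ψ ε)) := by
    rw [← hchord]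
    exact ⟨⟨(1 - s) / (1 + k * ε) * r, by rw [hr, smul_smul]⟩, hB2⟩
  have hdist := dist_le_dist_of_mem_segment hA4 hB4
  rw [← hf] at hdist
  have hlen : dist (O + (-s / (1 + k * ε)) • (c + ε • p))
      (O + ((1 - s) / (1 + k * ε)) • (c + ε • p)) = ‖c + ε • p‖ / (1 + k * ε) := by
    rw [dist_comm, dist_eq_norm, add_sub_add_left_eq_sub, ← sub_smul, ← sub_div, norm_smul,
      Real.norm_eq_abs, sub_neg_eq_add, sub_add_cancel, abs_of_pos (by positivity)]
    ring
  have hfs : f φs = ‖c‖ := by rw [hf, dist_comm, dist_eq_norm]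
  rw [hlen, div_le_iff₀ hm] at hdist
  have hle : ‖c + ε • p‖ ≤ ‖c‖ * (1 + k * ε) :=
    hdist.trans (mul_le_mul_of_nonneg_right (hfε.trans hfs.le) hm.le)
  exact (norm_mul_lt_norm_add_smul hc0 hp0 hcp hε0).not_ge hle
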